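/- (Primal Γ3 identity from the proof of Lemma 2.) Let a : [0,1] → ℝ be twice continuously differentiable, P1, P2 : [0,1]² → ℝ twice continuously differentiable with P1(x,ξ) = P2(ξ,x) for all x, ξ, and w : [0,1] → ℝ twice continuously differentiable with w'(0) = 0. Then ∫₀¹ w''(x)·a(x)·[∫₀^x P1(x,ξ)w(ξ)dξ + ∫_x^1 P2(x,ξ)w(ξ)dξ] dx = ∫₀¹ w(x)²·[∂/∂x (a(x)(P1(x,ξ) − P2(x,ξ)))]evaluated at ξ = x dx + (1/2)∫₀¹∫₀^x w(x)·[∂²/∂x²(a(x)P1(x,ξ)) + ∂²/∂ξ²(a(ξ)P1(x,ξ))]·w(ξ) dξ dx + (1/2)∫₀¹∫_x^1 w(x)·[∂²/∂x²(a(x)P2(x,ξ)) + ∂²/∂ξ²(a(ξ)P2(x,ξ))]·w(ξ) dξ dx − w(1)·∫₀¹ [a'(1)P1(1,ξ) + a(1)·∂P1/∂x(1,ξ)]·w(ξ) dξ + w(0)·∫₀¹ [a'(0)P2(0,ξ) + a(0)·∂P2/∂x(0,ξ)]·w(ξ) dξ + w'(1)·∫₀¹ a(1)·P1(1,ξ)·w(ξ)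 dξ. -/

import Mathlib

open MeasureTheory

lemma partial_exists (n : ℕ) (g : ℝ × ℝ → ℝ) (hg : ContDiff ℝ (n+1 : ℕ) g) :
    ∃ g' : ℝ × ℝ → ℝ, ContDiff ℝ n g' ∧
      ∀ x ξ : ℝ, HasDerivAt (fun t => g (t, ξ)) (g' (x, ξ)) x := by
  refine ⟨fun p => fderiv ℝ g p (1, 0), ?_, ?_⟩
  · have h := hg.fderiv_right (m := n) (by norm_cast)
    exact h.clm_apply contDiff_const
  · intro x ξ
    have h1 : HasFDerivAt g (fderiv ℝ g (x, ξ)) (x, ξ) :=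
      (hg.differentiable (by simp) _).hasFDerivAt
    have h2 : HasDerivAt (fun t : ℝ => (t, ξ)) ((1 : ℝ), (0 : ℝ)) x :=
      (hasDerivAt_id x).prodMk (hasDerivAt_const x ξ)
    exact h1.comp_hasDerivAt x h2

lemma partial2_exists (g : ℝ × ℝ → ℝ) (hg : ContDiff ℝ 2 g) :
    ∃ g1 g2 : ℝ × ℝ → ℝ, Continuous g1 ∧ Continuous g2 ∧
      (∀ x ξ : ℝ, HasDerivAt (fun t => g (t, ξ)) (g1 (x, ξ)) x) ∧
      (∀ x ξ : ℝ, HasDerivAt (fun t => g1 (t, ξ)) (g2 (x, ξ)) x) := by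
  obtain ⟨g1, h1, h1'⟩ := partial_exists 1 g (by exact_mod_cast hg)
  obtain ⟨g2, h2, h2'⟩ := partial_exists 0 g1 (by exact_mod_cast h1)
  exact ⟨g1, g2, h1.continuous, h2.continuous, h1', h2'⟩

lemma tri_swap (f : ℝ → ℝ → ℝ) (hf : Continuous (fun p : ℝ × ℝ => f p.1 p.2)) :
    (∫ x in (0:ℝ)..1, ∫ ξ in (0:ℝ)..x, f x ξ) = ∫ ξ in (0:ℝ)..1, ∫ x in ξ..(1:ℝ), f x ξ := by
  have hS : MeasurableSet {p : ℝ × ℝ | p.2 ≤ p.1} :=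
    measurableSet_le measurable_snd measurable_fst
  have e1 : ∀ x ∈ Set.uIcc (0:ℝ) 1, (∫ ξ in (0:ℝ)..x, f x ξ)
      = ∫ ξ in (0:ℝ)..1, Set.indicator {p : ℝ × ℝ | p.2 ≤ p.1} (fun p => f p.1 p.2) (x, ξ) := by
    intro x hx
    rw [Set.uIcc_of_le zero_le_one] at hx
    rw [intervalIntegral.integral_of_le hx.1, intervalIntegral.integral_of_le zero_le_one]
    have : (fun ξ => Set.indicator {p : ℝ × ℝ | p.2 ≤ p.1} (fun p => f p.1 p.2) (x, ξ))
        = Set.indicator (Set.Iic x) (fun ξ => f x ξ) := by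
      ext ξ; simp [Set.indicator]
    rw [this, setIntegral_indicator measurableSet_Iic]
    congr 2
    ext ξ; simp only [Set.mem_Ioc, Set.mem_inter_iff, Set.mem_Iic]
    constructor
    · rintro ⟨h1, h2⟩; exact ⟨⟨h1, h2.trans hx.2⟩, h2⟩
    · rintro ⟨h1, h2⟩; exact ⟨h1.1, h2⟩
  have e2 : ∀ ξ ∈ Set.uIcc (0:ℝ) 1, (∫ x in ξ..(1:ℝ), f x ξ)
      = ∫ x in (0:ℝ)..1, Set.indicator {p : ℝ × ℝ | p.2 ≤ p.1} (fun p => f p.1 p.2) (x, ξ) := by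
    intro ξ hx
    rw [Set.uIcc_of_le zero_le_one] at hx
    rw [intervalIntegral.integral_of_le hx.2, intervalIntegral.integral_of_le zero_le_one,
      ← integral_Icc_eq_integral_Ioc, ← integral_Icc_eq_integral_Ioc]
    have : (fun x => Set.indicator {p : ℝ × ℝ | p.2 ≤ p.1} (fun p => f p.1 p.2) (x, ξ))
        = Set.indicator (Set.Ici ξ) (fun x => f x ξ) := by
      ext x; simp [Set.indicator]
    rw [this, setIntegral_indicator measurableSet_Ici]
    congr 2
    ext x; simp only [Set.mem_Icc, Set.mem_inter_iff, Set.mem_Ici]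
    constructor
    · rintro ⟨h1, h2⟩; exact ⟨⟨hx.1.trans h1, h2⟩, h1⟩
    · rintro ⟨h1, h2⟩; exact ⟨h2, h1.2⟩
  rw [intervalIntegral.integral_congr e1, intervalIntegral.integral_congr e2]
  rw [intervalIntegral.integral_of_le zero_le_one, intervalIntegral.integral_of_le zero_le_one]
  simp_rw [intervalIntegral.integral_of_le (zero_le_one (α := ℝ))]
  refine integral_integral_swap
    (f := fun x ξ => Set.indicator {p : ℝ × ℝ | p.2 ≤ p.1} (fun p => f p.1 p.2) (x, ξ)) ?_
  have hI : IntegrableOn (fun p : ℝ × ℝ => f p.1 p.2)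
      (Set.Ioc (0:ℝ) 1 ×ˢ Set.Ioc (0:ℝ) 1) (volume.prod volume) :=
    (hf.continuousOn.integrableOn_compact (isCompact_Icc.prod isCompact_Icc)).mono_set
      (Set.prod_mono Set.Ioc_subset_Icc_self Set.Ioc_subset_Icc_self)
  rw [IntegrableOn, ← Measure.prod_restrict] at hI
  exact hI.indicator hS

lemma ibp2 (u u1 u2 v v1 v2 : ℝ → ℝ) (a b : ℝ)
    (hu : ∀ x, HasDerivAt u (u1 x) x) (hu1 : ∀ x, HasDerivAt u1 (u2 x) x)
    (hv : ∀ x, HasDerivAt v (v1 x) x) (hv1 : ∀ x, HasDerivAt v1 (v2 x) x)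
    (cu : Continuous u2) (cv : Continuous v2) :
    (∫ x in a..b, u2 x * v x) = u1 b * v b - u1 a * v a - u b * v1 b + u a * v1 a
      + ∫ x in a..b, u x * v2 x := by
  have c0 : Continuous u := continuous_iff_continuousAt.2 fun x => (hu x).continuousAt
  have c1 : Continuous v := continuous_iff_continuousAt.2 fun x => (hv x).continuousAt
  have i1 : IntervalIntegrable (fun x => u2 x * v x) volume a b :=
    (cu.mul c1).intervalIntegrable _ _
  have i2 : IntervalIntegrable (fun x => u x * v2 x) volume a b :=
    (c0.mul cv).intervalIntegrable _ _
  have h := intervalIntegral.integral_eq_sub_of_hasDerivAt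
    (f := fun x => u1 x * v x - u x * v1 x) (f' := fun x => u2 x * v x - u x * v2 x)
    (a := a) (b := b) (fun x _ => by
      refine (((hu1 x).mul (hv x)).sub ((hu x).mul (hv1 x))).congr_deriv ?_; ring) (i1.sub i2)
  rw [intervalIntegral.integral_sub i1 i2] at h
  linarith

lemma cont_tri (f : ℝ → ℝ → ℝ) (hf : Continuous (fun p : ℝ × ℝ => f p.1 p.2)) :
    Continuous (fun x => ∫ ξ in (0:ℝ)..x, f x ξ) :=
  intervalIntegral.continuous_parametric_intervalIntegral_of_continuous hf continuous_id

lemma cont_tri' (f : ℝ → ℝ → ℝ) (hf : Continuous (fun p : ℝ × ℝ => f p.1 p.2)) :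
    Continuous (fun x => ∫ ξ in x..(1:ℝ), f x ξ) := by
  have h : (fun x => ∫ ξ in x..(1:ℝ), f x ξ) = fun x => - ∫ ξ in (1:ℝ)..x, f x ξ := by
    ext x; exact intervalIntegral.integral_symm _ _
  rw [h]
  exact (intervalIntegral.continuous_parametric_intervalIntegral_of_continuous hf
    continuous_id).neg

/-- abstract form -/
lemma core (w w1 w2 : ℝ → ℝ) (hw : ∀ x, HasDerivAt w (w1 x) x)
    (hw1 : ∀ x, HasDerivAt w1 (w2 x) x) (cw2 : Continuous w2) (hw0 : w1 0 = 0)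
    (Q Qx Qxx R Rx Rxx : ℝ × ℝ → ℝ)
    (cQ : Continuous Q) (cQx : Continuous Qx) (cQxx : Continuous Qxx)
    (cR : Continuous R) (cRx : Continuous Rx) (cRxx : Continuous Rxx)
    (hQ : ∀ x ξ : ℝ, HasDerivAt (fun t => Q (t, ξ)) (Qx (x, ξ)) x)
    (hQx : ∀ x ξ : ℝ, HasDerivAt (fun t => Qx (t, ξ)) (Qxx (x, ξ)) x)
    (hR : ∀ x ξ : ℝ, HasDerivAt (fun t => R (t, ξ)) (Rx (x, ξ)) x)
    (hRx : ∀ x ξ : ℝ, HasDerivAt (fun t => Rx (t, ξ)) (Rxx (x, ξ)) x)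
    (hd : ∀ x, Q (x, x) = R (x, x)) :
    (∫ x in (0:ℝ)..1, ((∫ ξ in (0:ℝ)..x, w2 x * Q (x, ξ) * w ξ)
        + ∫ ξ in x..(1:ℝ), w2 x * R (x, ξ) * w ξ))
      = (∫ x in (0:ℝ)..1, (w x) ^ 2 * (Qx (x, x) - Rx (x, x)))
        + (1/2) * (∫ x in (0:ℝ)..1, ∫ ξ in (0:ℝ)..x,
            w x * (Qxx (x, ξ) + Rxx (ξ, x)) * w ξ)
        + (1/2) * (∫ x in (0:ℝ)..1, ∫ ξ in x..(1:ℝ),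
            w x * (Rxx (x, ξ) + Qxx (ξ, x)) * w ξ)
        - w 1 * (∫ ξ in (0:ℝ)..1, Qx (1, ξ) * w ξ)
        + w 0 * (∫ ξ in (0:ℝ)..1, Rx (0, ξ) * w ξ)
        + w1 1 * (∫ ξ in (0:ℝ)..1, Q (1, ξ) * w ξ) := by
  have cw : Continuous w := continuous_iff_continuousAt.2 fun x => (hw x).continuousAt
  have tA : Continuous (fun x => ∫ ξ in x..(1:ℝ), w x * Qxx (ξ, x) * w ξ) :=
    cont_tri' (fun x ξ => w x * Qxx (ξ, x) * w ξ) (by fun_prop)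
  have tB : Continuous (fun x => ∫ ξ in (0:ℝ)..x, w x * Rxx (ξ, x) * w ξ) :=
    cont_tri (fun x ξ => w x * Rxx (ξ, x) * w ξ) (by fun_prop)
  have tA' : Continuous (fun x => ∫ ξ in (0:ℝ)..x, w x * Qxx (x, ξ) * w ξ) :=
    cont_tri (fun x ξ => w x * Qxx (x, ξ) * w ξ) (by fun_prop)
  have tB' : Continuous (fun x => ∫ ξ in x..(1:ℝ), w x * Rxx (x, ξ) * w ξ) :=
    cont_tri' (fun x ξ => w x * Rxx (x, ξ) * w ξ) (by fun_prop)
  have t1 : Continuous (fun x => ∫ ξ in (0:ℝ)..x, w2 x * Q (x, ξ) * w ξ) :=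
    cont_tri (fun x ξ => w2 x * Q (x, ξ) * w ξ) (by fun_prop)
  have t2 : Continuous (fun x => ∫ ξ in x..(1:ℝ), w2 x * R (x, ξ) * w ξ) :=
    cont_tri' (fun x ξ => w2 x * R (x, ξ) * w ξ) (by fun_prop)
  have t3 : Continuous (fun x => ∫ ξ in x..(1:ℝ), w2 ξ * Q (ξ, x) * w x) :=
    cont_tri' (fun x ξ => w2 ξ * Q (ξ, x) * w x) (by fun_prop)
  have t4 : Continuous (fun x => ∫ ξ in (0:ℝ)..x, w2 ξ * R (ξ, x) * w x) :=
    cont_tri (fun x ξ => w2 ξ * R (ξ, x) * w x) (by fun_prop)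
  have ii : ∀ {f : ℝ → ℝ}, Continuous f → ∀ a b, IntervalIntegrable f volume a b :=
    fun h a b => h.intervalIntegrable a b
  have hA : (∫ x in (0:ℝ)..1, ∫ ξ in (0:ℝ)..x, w x * Qxx (x, ξ) * w ξ)
      = ∫ x in (0:ℝ)..1, ∫ ξ in x..(1:ℝ), w x * Qxx (ξ, x) * w ξ := by
    rw [tri_swap (fun x ξ => w x * Qxx (x, ξ) * w ξ) (by fun_prop)]
    congr 1; ext x; congr 1; ext y; ring
  have hB : (∫ x in (0:ℝ)..1, ∫ ξ in x..(1:ℝ), w x * Rxx (x, ξ) * w ξ)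
      = ∫ x in (0:ℝ)..1, ∫ ξ in (0:ℝ)..x, w x * Rxx (ξ, x) * w ξ := by
    rw [← tri_swap (fun x ξ => w ξ * Rxx (ξ, x) * w x) (by fun_prop)]
    congr 1; ext x; congr 1; ext y; ring
  have s1 : (∫ x in (0:ℝ)..1, ∫ ξ in (0:ℝ)..x, w x * (Qxx (x, ξ) + Rxx (ξ, x)) * w ξ)
      = (∫ x in (0:ℝ)..1, ∫ ξ in (0:ℝ)..x, w x * Qxx (x, ξ) * w ξ)
       + ∫ x in (0:ℝ)..1, ∫ ξ in (0:ℝ)..x, w x * Rxx (ξ, x) * w ξ := by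
    rw [← intervalIntegral.integral_add (ii tA' _ _) (ii tB _ _)]
    congr 1; ext x
    rw [← intervalIntegral.integral_add (ii (by fun_prop) _ _) (ii (by fun_prop) _ _)]
    congr 1; ext y; ring
  have s2 : (∫ x in (0:ℝ)..1, ∫ ξ in x..(1:ℝ), w x * (Rxx (x, ξ) + Qxx (ξ, x)) * w ξ)
      = (∫ x in (0:ℝ)..1, ∫ ξ in x..(1:ℝ), w x * Rxx (x, ξ) * w ξ)
       + ∫ x in (0:ℝ)..1, ∫ ξ in x..(1:ℝ), w x * Qxx (ξ, x) * w ξ := by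
    rw [← intervalIntegral.integral_add (ii tB' _ _) (ii tA _ _)]
    congr 1; ext x
    rw [← intervalIntegral.integral_add (ii (by fun_prop) _ _) (ii (by fun_prop) _ _)]
    congr 1; ext y; ring
  rw [intervalIntegral.integral_add (ii t1 _ _) (ii t2 _ _),
    tri_swap (fun x ξ => w2 x * Q (x, ξ) * w ξ) (by fun_prop),
    ← tri_swap (fun ξ x => w2 x * R (x, ξ) * w ξ) (by fun_prop),
    ← intervalIntegral.integral_add (ii t3 _ _) (ii t4 _ _), s1, s2, hA, hB]
  have key : ∀ x : ℝ, (∫ ξ in x..(1:ℝ), w2 ξ * Q (ξ, x) * w x)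
      + (∫ ξ in (0:ℝ)..x, w2 ξ * R (ξ, x) * w x)
      = (w x) ^ 2 * (Qx (x, x) - Rx (x, x)) - w 1 * (Qx (1, x) * w x)
        + w 0 * (Rx (0, x) * w x) + w1 1 * (Q (1, x) * w x)
        + (∫ ξ in x..(1:ℝ), w x * Qxx (ξ, x) * w ξ)
        + ∫ ξ in (0:ℝ)..x, w x * Rxx (ξ, x) * w ξ := by
    intro x
    have k1 := ibp2 w w1 w2 (fun t => Q (t, x)) (fun t => Qx (t, x)) (fun t => Qxx (t, x)) x 1
      hw hw1 (fun t => hQ t x) (fun t => hQx t x) cw2 (by fun_prop)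
    have k2 := ibp2 w w1 w2 (fun t => R (t, x)) (fun t => Rx (t, x)) (fun t => Rxx (t, x)) 0 x
      hw hw1 (fun t => hR t x) (fun t => hRx t x) cw2 (by fun_prop)
    have e1 : (∫ ξ in x..(1:ℝ), w x * Qxx (ξ, x) * w ξ)
        = (∫ ξ in x..(1:ℝ), w ξ * Qxx (ξ, x)) * w x := by
      rw [← intervalIntegral.integral_mul_const]; congr 1; ext y; ring
    have e2 : (∫ ξ in (0:ℝ)..x, w x * Rxx (ξ, x) * w ξ)
        = (∫ ξ in (0:ℝ)..x, w ξ * Rxx (ξ, x)) * w x := by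
      rw [← intervalIntegral.integral_mul_const]; congr 1; ext y; ring
    rw [e1, e2, intervalIntegral.integral_mul_const, intervalIntegral.integral_mul_const, k1, k2,
      hw0, hd x]
    ring
  simp_rw [key]
  rw [intervalIntegral.integral_add (ii (by fun_prop) _ _) (ii tB _ _),
    intervalIntegral.integral_add (ii (by fun_prop) _ _) (ii tA _ _),
    intervalIntegral.integral_add (ii (by fun_prop) _ _) (ii (by fun_prop) _ _),
    intervalIntegral.integral_add (ii (by fun_prop) _ _) (ii (by fun_prop) _ _),
    intervalIntegral.integral_sub (ii (by fun_prop) _ _) (ii (by fun_prop) _ _),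
    intervalIntegral.integral_const_mul, intervalIntegral.integral_const_mul,
    intervalIntegral.integral_const_mul]
  ring



/-- Primal Γ₃ identity from the proof of Lemma 2. -/
theorem primal_gamma3_identity
    (a : ℝ → ℝ) (ha : ContDiff ℝ 2 a)
    (P1 P2 : ℝ → ℝ → ℝ)
    (hP1 : ContDiff ℝ 2 (fun p : ℝ × ℝ => P1 p.1 p.2))
    (hP2 : ContDiff ℝ 2 (fun p : ℝ × ℝ => P2 p.1 p.2))
    (hsym : ∀ x ξ : ℝ, P1 x ξ = P2 ξ x)
    (w : ℝ → ℝ) (hw : ContDiff ℝ 2 w) (hw0 : deriv w 0 = 0) :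
    (∫ x in (0:ℝ)..1, iteratedDeriv 2 w x * a x *
        ((∫ ξ in (0:ℝ)..x, P1 x ξ * w ξ) + ∫ ξ in x..(1:ℝ), P2 x ξ * w ξ))
      = (∫ x in (0:ℝ)..1,
            (w x) ^ 2 * deriv (fun t => a t * (P1 t x - P2 t x)) x)
        + (1/2) * (∫ x in (0:ℝ)..1, ∫ ξ in (0:ℝ)..x,
            w x * (iteratedDeriv 2 (fun t => a t * P1 t ξ) x
              + iteratedDeriv 2 (fun s => a s * P1 x s) ξ) * w ξ)
        + (1/2) * (∫ x in (0:ℝ)..1, ∫ ξ in x..(1:ℝ),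
            w x * (iteratedDeriv 2 (fun t => a t * P2 t ξ) x
              + iteratedDeriv 2 (fun s => a s * P2 x s) ξ) * w ξ)
        - w 1 * (∫ ξ in (0:ℝ)..1,
            (deriv a 1 * P1 1 ξ + a 1 * deriv (fun t => P1 t ξ) 1) * w ξ)
        + w 0 * (∫ ξ in (0:ℝ)..1,
            (deriv a 0 * P2 0 ξ + a 0 * deriv (fun t => P2 t ξ) 0) * w ξ)
        + deriv w 1 * (∫ ξ in (0:ℝ)..1, a 1 * P1 1 ξ * w ξ) := by
  have hQ2 : ContDiff ℝ 2 (fun p : ℝ × ℝ => a p.1 * P1 p.1 p.2) :=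
    (ha.comp contDiff_fst).mul hP1
  have hR2 : ContDiff ℝ 2 (fun p : ℝ × ℝ => a p.1 * P2 p.1 p.2) :=
    (ha.comp contDiff_fst).mul hP2
  obtain ⟨Qx, Qxx, cQx, cQxx, hQ, hQx⟩ := partial2_exists _ hQ2
  obtain ⟨Rx, Rxx, cRx, cRxx, hR, hRx⟩ := partial2_exists _ hR2
  have hw1 : ContDiff ℝ 1 (deriv w) := by
    have : ContDiff ℝ (1+1) w := by norm_num; exact hw
    exact (contDiff_succ_iff_deriv.1 this).2.2
  have hw2 : iteratedDeriv 2 w = deriv (deriv w) := by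
    rw [iteratedDeriv_succ, iteratedDeriv_one]
  have cw2 : Continuous (deriv (deriv w)) := hw1.continuous_deriv le_rfl
  have d2 : ∀ (f f1 f2 : ℝ → ℝ), (∀ x, HasDerivAt f (f1 x) x) → (∀ x, HasDerivAt f1 (f2 x) x) →
      iteratedDeriv 2 f = f2 := by
    intro f f1 f2 h1 h2
    rw [iteratedDeriv_succ, iteratedDeriv_one, funext fun x => (h1 x).deriv]
    exact funext fun x => (h2 x).deriv
  have q2 : ∀ x ξ, iteratedDeriv 2 (fun t => a t * P1 t ξ) x = Qxx (x, ξ) := fun x ξ =>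
    congrFun (d2 _ _ _ (fun t => hQ t ξ) (fun t => hQx t ξ)) x
  have r2 : ∀ x ξ, iteratedDeriv 2 (fun t => a t * P2 t ξ) x = Rxx (x, ξ) := fun x ξ =>
    congrFun (d2 _ _ _ (fun t => hR t ξ) (fun t => hRx t ξ)) x
  have q2' : ∀ x ξ, iteratedDeriv 2 (fun s => a s * P1 x s) ξ = Rxx (ξ, x) := by
    intro x ξ; simp_rw [hsym]; exact r2 ξ x
  have r2' : ∀ x ξ, iteratedDeriv 2 (fun s => a s * P2 x s) ξ = Qxx (ξ, x) := by
    intro x ξ; simp_rw [← hsym]; exact q2 ξ x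
  have dd : ∀ x, deriv (fun t => a t * (P1 t x - P2 t x)) x = Qx (x, x) - Rx (x, x) := by
    intro x
    simp_rw [mul_sub]
    exact ((hQ x x).sub (hR x x)).deriv
  have da : ∀ x, HasDerivAt a (deriv a x) x := fun x =>
    (ha.differentiable (by norm_num) x).hasDerivAt
  have bd : ∀ (P : ℝ → ℝ → ℝ), ContDiff ℝ 2 (fun p : ℝ × ℝ => P p.1 p.2) → ∀ x ξ c,
      HasDerivAt (fun t => a t * P t ξ) c x →
      deriv a x * P x ξ + a x * deriv (fun t => P t ξ) x = c := by
    intro P hP x ξ c hc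
    have h : DifferentiableAt ℝ (fun t => P t ξ) x := by
      have : ContDiff ℝ 2 (fun t => P t ξ) := hP.comp (contDiff_id.prodMk contDiff_const)
      exact this.differentiable (by norm_num) x
    exact ((da x).mul h.hasDerivAt).unique hc
  have b1 : ∀ ξ, deriv a 1 * P1 1 ξ + a 1 * deriv (fun t => P1 t ξ) 1 = Qx (1, ξ) :=
    fun ξ => bd P1 hP1 1 ξ _ (hQ 1 ξ)
  have b0 : ∀ ξ, deriv a 0 * P2 0 ξ + a 0 * deriv (fun t => P2 t ξ) 0 = Rx (0, ξ) :=
    fun ξ => bd P2 hP2 0 ξ _ (hR 0 ξ)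
  simp_rw [q2, r2, q2', r2', dd, b1, b0, hw2]
  have H := core w (deriv w) (deriv (deriv w))
    (fun x => (hw.differentiable (by norm_num) x).hasDerivAt)
    (fun x => (hw1.differentiable (by norm_num) x).hasDerivAt) cw2 hw0
    _ Qx Qxx _ Rx Rxx hQ2.continuous cQx cQxx hR2.continuous cRx cRxx hQ hQx hR hRx
    (fun x => by simp [hsym])
  rw [← H]
  congr 1; ext x
  rw [mul_add, ← intervalIntegral.integral_const_mul, ← intervalIntegral.integral_const_mul]
  congr 1 <;> (congr 1; ext y; ring)
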